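/- Let (X,π) and (Y,σ) be semidynamical systems on metric spaces, let x ∈ X be asymptotically almost periodic with cl(π⁺(x)) compact, and let y ∈ Y. Then y is comparable in limit with x if and only if there exists a continuous map h : L⁺(x) → L⁺(y) such that: (a) 𝓛_{x,q}^∞ ⊆ 𝓛_{y,h(q)}^∞ for every q ∈ L⁺(x); (b) h(π(q,t)) = σ(h(q),t) for every q ∈ L⁺(x) and every t ≥ 0; and (c) for every q̃ ∈ P_x and every time reparametrization g with ρ_X(π(x,t), π(q̃,g(t))) → 0 as t → +∞, one has lim_{t→+∞} ρ_Y(σ(y,t), σ(h(q̃), g(t))) = 0. -/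

import Mathlib

open Filter Topology
open scoped NNReal

/-- `π` is a semidynamical system on the metric space `Z`. -/
def IsSDS {Z : Type*} [MetricSpace Z] (π : Z → ℝ≥0 → Z) : Prop :=
  Continuous (fun p : Z × ℝ≥0 => π p.1 p.2) ∧ (∀ z, π z 0 = z) ∧
    ∀ z t s, π (π z t) s = π z (t + s)

/-- The positive limit set of a point `x` under `π`. -/
def limitSet {Z : Type*} [MetricSpace Z] (π : Z → ℝ≥0 → Z) (x : Z) : Set Z :=
  {p | ∃ t : ℕ → ℝ≥0, Tendsto t atTop atTop ∧
    Tendsto (fun n => π x (t n)) atTop (𝓝 p)}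

/-- `x` is an almost periodic point of the semidynamical system `π`. -/
def AlmostPer {Z : Type*} [MetricSpace Z] (π : Z → ℝ≥0 → Z) (x : Z) : Prop :=
  ∀ ε : ℝ, 0 < ε → ∃ T : ℝ≥0, 0 < T ∧ ∀ α : ℝ≥0, ∃ τ : ℝ≥0,
    α ≤ τ ∧ τ ≤ α + T ∧ 0 < τ ∧ ∀ t : ℝ≥0, dist (π x (t + τ)) (π x t) < ε

/-- The set `P_x`: points `z ∈ L⁺(x) ∩ L⁺(z)` whose motion tracks that of `x` up to a
time reparametrization (a homeomorphism `g` of `[0,∞)` with `g 0 = 0`). -/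
def Pset {Z : Type*} [MetricSpace Z] (π : Z → ℝ≥0 → Z) (x : Z) : Set Z :=
  {z | z ∈ limitSet π x ∧ z ∈ limitSet π z ∧
    ∃ g : ℝ≥0 ≃ₜ ℝ≥0, g 0 = 0 ∧
      Tendsto (fun t : ℝ≥0 => dist (π x t) (π z (g t))) atTop (𝓝 0)}

/-- `x` is asymptotically almost periodic: its motion tracks that of an almost periodic
point up to a time reparametrization. -/
def AsympAP {Z : Type*} [MetricSpace Z] (π : Z → ℝ≥0 → Z) (x : Z) : Prop :=
  ∃ p : Z, AlmostPer π p ∧ ∃ g : ℝ≥0 ≃ₜ ℝ≥0, g 0 = 0 ∧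
    Tendsto (fun t : ℝ≥0 => dist (π x t) (π p (g t))) atTop (𝓝 0)

/-!
For `q` in the limit set of `x`, consider the filter of late times at which `π x` is near `q`.
Comparability says that `σ y` converges along every sequence tending to this filter; interleaving
two such sequences shows that their limits agree, so `σ y` has a limit `h q` along the filter
itself. Continuity of `h` is then the usual argument with closed neighbourhoods, and equivariance
holds because a time shift by `s` carries the filter at `q` into the filter at `π q s`.

For the tracking property, test the limit on an ultrafilter of times finer than `atTop`. By
compactness `π x` tends along it to some `q`, hence `σ y` tends to `h q`. The tracking orbit
`π q' (g t)` tends to `q` as well and stays in the limit set, so continuity and equivariance of `h`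
give that `σ (h q') (g t) = h (π q' (g t))` tends to `h q`.
-/

section SequentialLimits

variable {ι Y : Type*} {F : Filter ι}

lemma exists_tendsto_interleave {t s : ℕ → ι} (ht : Tendsto t atTop F) (hs : Tendsto s atTop F) :
    ∃ w : ℕ → ι, Tendsto w atTop F ∧ (∀ n, w (2 * n) = t n) ∧ ∀ n, w (2 * n + 1) = s n := by
  have hhalf : Tendsto (fun n : ℕ => n / 2) atTop atTop :=
    Nat.tendsto_div_const_atTop two_ne_zero
  refine ⟨fun n => if Even n then t (n / 2) else s (n / 2),
    (ht.comp hhalf).if' (hs.comp hhalf), fun n => by simp, fun n => ?_⟩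
  have hn : (2 * n + 1) / 2 = n := by omega
  simp [hn]

lemma exists_tendsto_of_forall_seq_exists_tendsto [TopologicalSpace Y] [T2Space Y]
    [F.IsCountablyGenerated] [F.NeBot] {v : ι → Y}
    (hv : ∀ t : ℕ → ι, Tendsto t atTop F → ∃ a, Tendsto (fun n => v (t n)) atTop (𝓝 a)) :
    ∃ a, Tendsto v F (𝓝 a) := by
  obtain ⟨t, ht⟩ := F.exists_seq_tendsto
  obtain ⟨a, hta⟩ := hv t ht
  refine ⟨a, tendsto_of_seq_tendsto fun s hs => ?_⟩
  obtain ⟨w, hw, hwt, hws⟩ := exists_tendsto_interleave ht hs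
  obtain ⟨c, hwc⟩ := hv w hw
  have heven : Tendsto (fun n : ℕ => 2 * n) atTop atTop :=
    tendsto_id.const_mul_atTop' two_pos
  have hodd : Tendsto (fun n : ℕ => 2 * n + 1) atTop atTop :=
    tendsto_atTop_mono (fun n => Nat.le_succ (2 * n)) heven
  have hac : a = c :=
    tendsto_nhds_unique hta ((hwc.comp heven).congr fun n => congrArg v (hwt n))
  rw [hac]
  exact (hwc.comp hodd).congr fun n => congrArg v (hws n)

end SequentialLimits

section ApproachFilter

variable {ι κ X : Type*} [TopologicalSpace X] {l : Filter ι} {u : ι → X} {q : X}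

/-- The filter generated by `l` and the sets of times `i` at which `u i` is close to `q`. For
`l = atTop`, `u = π x`, the sequences tending to it are those of `𝓛_{x,q}^∞`. -/
def approachFilter (l : Filter ι) (u : ι → X) (q : X) : Filter ι :=
  l ⊓ comap u (𝓝 q)

instance approachFilter.isCountablyGenerated [l.IsCountablyGenerated]
    [FirstCountableTopology X] : (approachFilter l u q).IsCountablyGenerated :=
  inferInstanceAs (l ⊓ comap u (𝓝 q)).IsCountablyGenerated

lemma tendsto_approachFilter_iff {m : Filter κ} {t : κ → ι} :
    Tendsto t m (approachFilter l u q) ↔ Tendsto t m l ∧ Tendsto (fun k => u (t k)) m (𝓝 q) :=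
  tendsto_inf.trans (and_congr_right' tendsto_comap_iff)

lemma approachFilter_le : approachFilter l u q ≤ l :=
  inf_le_left

lemma tendsto_approachFilter : Tendsto u (approachFilter l u q) (𝓝 q) :=
  tendsto_comap.mono_left inf_le_right

lemma approachFilter_neBot_iff : (approachFilter l u q).NeBot ↔ MapClusterPt q l u := by
  rw [approachFilter, ← map_neBot_iff u, Filter.push_pull, inf_comm]
  rfl

lemma eventually_eventually_approachFilter {P : ι → Prop}
    (hP : ∀ᶠ i in approachFilter l u q, P i) :
    ∀ᶠ r in 𝓝 q, ∀ᶠ i in approachFilter l u r, P i := by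
  obtain ⟨A, hA, B, ⟨U, hU, hUB⟩, hAB⟩ := eventually_inf.1 hP
  filter_upwards [eventually_mem_nhds_iff.2 hU] with r hr
  exact eventually_inf.2 ⟨A, hA, B, ⟨U, hr, hUB⟩, hAB⟩

lemma mapClusterPt_iff_exists_seq [l.IsCountablyGenerated] [FirstCountableTopology X] :
    MapClusterPt q l u ↔
      ∃ t : ℕ → ι, Tendsto t atTop l ∧ Tendsto (fun n => u (t n)) atTop (𝓝 q) := by
  refine ⟨fun hq => ?_, fun ⟨t, ht, htq⟩ => htq.mapClusterPt.of_comp ht⟩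
  obtain ⟨t, htq, ht⟩ := hq.exists_seq_tendsto
  exact ⟨t, ht, htq⟩

end ApproachFilter

section LimitMap

variable {ι X Y : Type*} [TopologicalSpace X] [TopologicalSpace Y]
  {l : Filter ι} {u : ι → X} {v : ι → Y} {h : X → Y} {q : X}

/-- Comparability in limit of `v` with `u`: along any sequence tending to `l`, convergence of `u`
forces convergence of `v`. For `l = atTop`, `u = π x`, `v = σ y` it reads `𝓛ₓ^∞ ⊆ 𝓛_y^∞`. -/
def ComparableInLimit (l : Filter ι) (u : ι → X) (v : ι → Y) : Prop :=
  ∀ t : ℕ → ι, Tendsto t atTop l → (∃ p, Tendsto (fun n => u (t n)) atTop (𝓝 p)) →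
    ∃ a, Tendsto (fun n => v (t n)) atTop (𝓝 a)

/-- `h` sends every cluster point of `u` to the limit that `v` has when `u` approaches that point,
which is condition (a) in terms of filters. The values of `h` elsewhere are arbitrary. -/
def IsLimitMap (l : Filter ι) (u : ι → X) (v : ι → Y) (h : X → Y) : Prop :=
  ∀ q, MapClusterPt q l u → Tendsto v (approachFilter l u q) (𝓝 (h q))

lemma isLimitMap_iff_seq [l.IsCountablyGenerated] [FirstCountableTopology X] :
    IsLimitMap l u v h ↔ ∀ q, MapClusterPt q l u → ∀ t : ℕ → ι, Tendsto t atTop l →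
      Tendsto (fun n => u (t n)) atTop (𝓝 q) → Tendsto (fun n => v (t n)) atTop (𝓝 (h q)) := by
  refine forall₂_congr fun q _ => ?_
  rw [tendsto_iff_seq_tendsto]
  simp only [tendsto_approachFilter_iff, and_imp, Function.comp_def]

lemma ComparableInLimit.exists_isLimitMap [Nonempty Y] [T2Space Y] [l.IsCountablyGenerated]
    [FirstCountableTopology X] (hc : ComparableInLimit l u v) : ∃ h, IsLimitMap l u v h := by
  have hlim : ∀ q, MapClusterPt q l u → ∃ a, Tendsto v (approachFilter l u q) (𝓝 a) := by
    intro q hq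
    have := approachFilter_neBot_iff.2 hq
    refine exists_tendsto_of_forall_seq_exists_tendsto fun t ht => ?_
    obtain ⟨htl, htq⟩ := tendsto_approachFilter_iff.1 ht
    exact hc t htl ⟨q, htq⟩
  choose! h hh using hlim
  exact ⟨h, hh⟩

namespace IsLimitMap

lemma comparableInLimit (hh : IsLimitMap l u v h) : ComparableInLimit l u v := by
  rintro t ht ⟨q, htq⟩
  exact ⟨h q, (hh q (htq.mapClusterPt.of_comp ht)).comp (tendsto_approachFilter_iff.2 ⟨ht, htq⟩)⟩

lemma mapClusterPt (hh : IsLimitMap l u v h) (hq : MapClusterPt q l u) :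
    MapClusterPt (h q) l v := by
  have := approachFilter_neBot_iff.2 hq
  exact (hh q hq).mapClusterPt.mono approachFilter_le

lemma continuousOn [RegularSpace Y] (hh : IsLimitMap l u v h) :
    ContinuousOn h {q | MapClusterPt q l u} := by
  intro q hq
  refine (closed_nhds_basis (h q)).tendsto_right_iff.2 fun V ⟨hV, hVclosed⟩ => ?_
  have hnear : ∀ᶠ r in 𝓝 q, ∀ᶠ i in approachFilter l u r, v i ∈ V :=
    eventually_eventually_approachFilter (hh q hq hV)
  filter_upwards [self_mem_nhdsWithin, nhdsWithin_le_nhds hnear] with r hr hrV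
  have := approachFilter_neBot_iff.2 hr
  exact hVclosed.mem_of_tendsto (hh r hr) hrV

end IsLimitMap

section Semiconj

variable {τ : ι → ι} {f : X → X} {k : Y → Y}

lemma tendsto_approachFilter_of_semiconj (hτ : Tendsto τ l l) (hu : Function.Semiconj u τ f)
    (hf : ContinuousAt f q) : Tendsto τ (approachFilter l u q) (approachFilter l u (f q)) := by
  refine tendsto_approachFilter_iff.2 ⟨hτ.mono_left approachFilter_le, ?_⟩
  simpa only [hu.eq, Function.comp_def] using hf.tendsto.comp tendsto_approachFilter

lemma mapClusterPt_of_semiconj (hq : MapClusterPt q l u) (hτ : Tendsto τ l l)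
    (hu : Function.Semiconj u τ f) (hf : ContinuousAt f q) : MapClusterPt (f q) l u :=
  .of_comp hτ (hu.comp_eq ▸ hq.continuousAt_comp hf)

lemma IsLimitMap.apply_of_semiconj [T2Space Y] (hh : IsLimitMap l u v h)
    (hq : MapClusterPt q l u) (hτ : Tendsto τ l l) (hu : Function.Semiconj u τ f)
    (hv : Function.Semiconj v τ k) (hf : ContinuousAt f q) (hk : ContinuousAt k (h q)) :
    h (f q) = k (h q) := by
  have := approachFilter_neBot_iff.2 hq
  have hshift : Tendsto (fun i => v (τ i)) (approachFilter l u q) (𝓝 (h (f q))) :=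
    (hh (f q) (mapClusterPt_of_semiconj hq hτ hu hf)).comp
      (tendsto_approachFilter_of_semiconj hτ hu hf)
  simp only [hv.eq] at hshift
  exact tendsto_nhds_unique hshift (hk.tendsto.comp (hh q hq))

end Semiconj

end LimitMap

lemma IsLimitMap.tendsto_dist {ι X Y : Type*} [PseudoMetricSpace X] [PseudoMetricSpace Y]
    {l : Filter ι} {u : ι → X} {v : ι → Y} {h : X → Y} (hh : IsLimitMap l u v h)
    {K : Set X} (hK : IsCompact K) (huK : ∀ᶠ i in l, u i ∈ K) {r : ι → X}
    (hr : ∀ᶠ i in l, MapClusterPt (r i) l u) (hur : Tendsto (fun i => dist (u i) (r i)) l (𝓝 0)) :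
    Tendsto (fun i => dist (v i) (h (r i))) l (𝓝 0) := by
  refine (tendsto_iff_ultrafilter _ _ _).2 fun 𝒰 h𝒰 => ?_
  obtain ⟨q, -, huq : Tendsto u 𝒰 (𝓝 q)⟩ :=
    hK.ultrafilter_le_nhds (𝒰.map u) (le_principal_iff.2 (h𝒰 huK))
  have hq : MapClusterPt q l u := huq.mapClusterPt.mono h𝒰
  have hv : Tendsto v 𝒰 (𝓝 (h q)) :=
    (hh q hq).comp (tendsto_approachFilter_iff.2 ⟨h𝒰, huq⟩)
  have hrq : Tendsto r 𝒰 (𝓝 q) := huq.congr_dist (hur.mono_left h𝒰)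
  have hhr : Tendsto (fun i => h (r i)) 𝒰 (𝓝 (h q)) :=
    (hh.continuousOn q hq).tendsto.comp (tendsto_nhdsWithin_iff.2 ⟨hrq, h𝒰 hr⟩)
  simpa only [dist_self] using hv.dist hhr

section Semidynamical

variable {X Y : Type*} [MetricSpace X] [MetricSpace Y] {π : X → ℝ≥0 → X} {σ : Y → ℝ≥0 → Y}
  {x : X} {y : Y} {h : X → Y} {q : X}

lemma mem_limitSet_iff_mapClusterPt : q ∈ limitSet π x ↔ MapClusterPt q atTop (π x) :=
  mapClusterPt_iff_exists_seq.symm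

lemma tendsto_add_const_atTop {M : Type*} [Preorder M] [Add M] [CanonicallyOrderedAdd M] (s : M) :
    Tendsto (· + s) atTop atTop :=
  tendsto_atTop_mono (fun _ => le_self_add) tendsto_id

lemma IsSDS.continuous_apply (hπ : IsSDS π) (s : ℝ≥0) : Continuous fun z => π z s :=
  hπ.1.comp (Continuous.prodMk_left s)

lemma IsSDS.semiconj (hπ : IsSDS π) (x : X) (s : ℝ≥0) :
    Function.Semiconj (π x) (· + s) fun z => π z s :=
  fun t => (hπ.2.2 x t s).symm

lemma IsSDS.apply_mem_limitSet (hπ : IsSDS π) (hq : q ∈ limitSet π x) (s : ℝ≥0) :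
    π q s ∈ limitSet π x :=
  mem_limitSet_iff_mapClusterPt.2 <| mapClusterPt_of_semiconj
    (mem_limitSet_iff_mapClusterPt.1 hq) (tendsto_add_const_atTop s) (hπ.semiconj x s)
    (hπ.continuous_apply s).continuousAt

lemma isLimitMap_iff_forall_mem_limitSet :
    IsLimitMap atTop (π x) (σ y) h ↔ ∀ q ∈ limitSet π x, ∀ t : ℕ → ℝ≥0, Tendsto t atTop atTop →
      Tendsto (fun n => π x (t n)) atTop (𝓝 q) →
      Tendsto (fun n => σ y (t n)) atTop (𝓝 (h q)) := by
  simp only [isLimitMap_iff_seq, mem_limitSet_iff_mapClusterPt]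

namespace IsLimitMap

lemma continuousOn_limitSet (hh : IsLimitMap atTop (π x) (σ y) h) :
    ContinuousOn h (limitSet π x) :=
  hh.continuousOn.mono fun _ => mem_limitSet_iff_mapClusterPt.1

lemma mapsTo_limitSet (hh : IsLimitMap atTop (π x) (σ y) h) :
    Set.MapsTo h (limitSet π x) (limitSet σ y) := fun _ hq =>
  mem_limitSet_iff_mapClusterPt.2 (hh.mapClusterPt (mem_limitSet_iff_mapClusterPt.1 hq))

lemma equivariant (hh : IsLimitMap atTop (π x) (σ y) h) (hπ : IsSDS π) (hσ : IsSDS σ)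
    (hq : q ∈ limitSet π x) (s : ℝ≥0) : h (π q s) = σ (h q) s :=
  hh.apply_of_semiconj (mem_limitSet_iff_mapClusterPt.1 hq)
    (tendsto_add_const_atTop s) (hπ.semiconj x s) (hσ.semiconj y s)
    (hπ.continuous_apply s).continuousAt (hσ.continuous_apply s).continuousAt

lemma tendsto_dist_orbit (hh : IsLimitMap atTop (π x) (σ y) h) (hπ : IsSDS π) (hσ : IsSDS σ)
    (hcpt : IsCompact (closure (Set.range (π x)))) (hq : q ∈ limitSet π x) {g : ℝ≥0 → ℝ≥0}
    (hg : Tendsto (fun t => dist (π x t) (π q (g t))) atTop (𝓝 0)) :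
    Tendsto (fun t => dist (σ y t) (σ (h q) (g t))) atTop (𝓝 0) := by
  simp only [← hh.equivariant hπ hσ hq]
  exact hh.tendsto_dist hcpt (.of_forall fun t => subset_closure ⟨t, rfl⟩)
    (.of_forall fun t => mem_limitSet_iff_mapClusterPt.1 (hπ.apply_mem_limitSet hq (g t))) hg

end IsLimitMap

end Semidynamical

theorem stmt_12_general {X Y : Type*} [MetricSpace X] [MetricSpace Y]
    (π : X → ℝ≥0 → X) (σ : Y → ℝ≥0 → Y) (hπ : IsSDS π) (hσ : IsSDS σ)
    (x : X) (y : Y) (hcpt : IsCompact (closure (Set.range (π x)))) :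
    ComparableInLimit atTop (π x) (σ y) ↔
    (∃ h : X → Y, ContinuousOn h (limitSet π x) ∧
      Set.MapsTo h (limitSet π x) (limitSet σ y) ∧
      (∀ q ∈ limitSet π x, ∀ t : ℕ → ℝ≥0, Tendsto t atTop atTop →
        Tendsto (fun n => π x (t n)) atTop (𝓝 q) →
        Tendsto (fun n => σ y (t n)) atTop (𝓝 (h q))) ∧
      (∀ q ∈ limitSet π x, ∀ s : ℝ≥0, h (π q s) = σ (h q) s) ∧
      (∀ q' ∈ limitSet π x, ∀ g : ℝ≥0 → ℝ≥0,
        Tendsto (fun t : ℝ≥0 => dist (π x t) (π q' (g t))) atTop (𝓝 0) →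
        Tendsto (fun t : ℝ≥0 => dist (σ y t) (σ (h q') (g t))) atTop (𝓝 0))) := by
  constructor
  · intro hc
    have : Nonempty Y := ⟨y⟩
    obtain ⟨h, hh⟩ := hc.exists_isLimitMap
    exact ⟨h, hh.continuousOn_limitSet, hh.mapsTo_limitSet,
      isLimitMap_iff_forall_mem_limitSet.1 hh, fun _ hq => hh.equivariant hπ hσ hq,
      fun _ hq _ => hh.tendsto_dist_orbit hπ hσ hcpt hq⟩
  · rintro ⟨h, -, -, hlim, -, -⟩
    exact (isLimitMap_iff_forall_mem_limitSet.2 hlim).comparableInLimit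

theorem stmt_12 {X Y : Type*} [MetricSpace X] [MetricSpace Y]
    (π : X → ℝ≥0 → X) (σ : Y → ℝ≥0 → Y) (hπ : IsSDS π) (hσ : IsSDS σ)
    (x : X) (y : Y) (hx : AsympAP π x)
    (hcpt : IsCompact (closure (Set.range (π x)))) :
    (∀ t : ℕ → ℝ≥0, Tendsto t atTop atTop →
      (∃ p : X, Tendsto (fun n => π x (t n)) atTop (𝓝 p)) →
      ∃ q : Y, Tendsto (fun n => σ y (t n)) atTop (𝓝 q)) ↔
    (∃ h : X → Y, ContinuousOn h (limitSet π x) ∧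
      Set.MapsTo h (limitSet π x) (limitSet σ y) ∧
      (∀ q ∈ limitSet π x, ∀ t : ℕ → ℝ≥0, Tendsto t atTop atTop →
        Tendsto (fun n => π x (t n)) atTop (𝓝 q) →
        Tendsto (fun n => σ y (t n)) atTop (𝓝 (h q))) ∧
      (∀ q ∈ limitSet π x, ∀ s : ℝ≥0, h (π q s) = σ (h q) s) ∧
      (∀ q' ∈ Pset π x, ∀ g : ℝ≥0 ≃ₜ ℝ≥0, g 0 = 0 →
        Tendsto (fun t : ℝ≥0 => dist (π x t) (π q' (g t))) atTop (𝓝 0) →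
        Tendsto (fun t : ℝ≥0 => dist (σ y t) (σ (h q') (g t))) atTop (𝓝 0))) := by
  refine ⟨fun hc => ?_, fun ⟨_, _, _, hlim, _⟩ =>
    (isLimitMap_iff_forall_mem_limitSet.2 hlim).comparableInLimit⟩
  obtain ⟨h, hcont, hmaps, hlim, hequiv, htrack⟩ :=
    (stmt_12_general π σ hπ hσ x y hcpt).1 hc
  exact ⟨h, hcont, hmaps, hlim, hequiv, fun q' hq' g _ => htrack q' hq'.1 g⟩
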